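/- arXiv:2203.05487 — 2 statements merged into one kernel-verified Lean document; each statement's English description precedes it below -/
import Mathlib

section
/- Let G be a connected locally constructible graph and let V be a finite set of vertices of G. Then the cop has a strategy in the game of cops and robbers on G guaranteeing that, against every robber strategy, either the cop catches the robber or at some time the robber occupies a vertex outside V. -/
universe u

/-- `y` dominates `x` in `G`: `y ≠ x` and the closed neighbourhood of `x` is contained
in the closed neighbourhood of `y`. -/
def Dominates {V : Type u} (G : SimpleGraph V) (y x : V) : Prop :=
  y ≠ x ∧ ∀ z : V, (z = x ∨ G.Adj x z) → (z = y ∨ G.Adj y z)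

/-- `y` dominates `x` in the subgraph of `G` induced by `S`. -/
def DominatesOn {V : Type u} (G : SimpleGraph V) (S : Set V) (y x : V) : Prop :=
  y ≠ x ∧ ∀ z ∈ S, (z = x ∨ G.Adj x z) → (z = y ∨ G.Adj y z)

/-- `r` (a well-order on `V`) is a construction order for `G`: every non-root vertex `x`
(i.e. one with a strictly earlier vertex) is dominated, in the subgraph induced by the
vertices up to and including `x`, by some strictly earlier vertex. -/
def ConstructionOrderSpec {V : Type u} (G : SimpleGraph V) (r : V → V → Prop) : Prop :=
  ∀ x : V, (∃ y, r y x) → ∃ y, r y x ∧ DominatesOn G {z | r z x ∨ z = x} y x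

/-- A graph is constructible if it has a construction order. -/
def Constructible {V : Type u} (G : SimpleGraph V) : Prop :=
  ∃ r : V → V → Prop, IsWellOrder V r ∧ ConstructionOrderSpec G r

/-- Given a cop strategy `σ` (a function of the robber's history of positions) and a robber
position sequence `r`, the cop's position at time `n`: the cop has seen the robber's first
`n` positions when making his `n`-th move. `copPos σ r 0 = σ []` is the cop's start. -/
def copPos {V : Type u} (σ : List V → V) (r : ℕ → V) (n : ℕ) : V :=
  σ (List.ofFn fun i : Fin n => r i.val)

/-- A cop strategy is legal if each successive position is equal or adjacent to the previous one. -/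
def LegalCop {V : Type u} (G : SimpleGraph V) (σ : List V → V) : Prop :=
  ∀ l : List V, l ≠ [] → σ l = σ l.dropLast ∨ G.Adj (σ l.dropLast) (σ l)

/-- A legal robber position sequence: each move is to an adjacent vertex or staying put. -/
def LegalRun {V : Type u} (G : SimpleGraph V) (r : ℕ → V) : Prop :=
  ∀ n : ℕ, r (n + 1) = r n ∨ G.Adj (r n) (r (n + 1))

/-- The cop catches the robber: at some time their positions coincide (either just after the
robber's move, or just after the cop's move). -/
def Caught {V : Type u} (σ : List V → V) (r : ℕ → V) : Prop :=
  ∃ n : ℕ, copPos σ r n = r n ∨ copPos σ r (n + 1) = r n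

/-- `G` is cop-win: the cop has a legal strategy catching every legal robber play. -/
def CopWin {V : Type u} (G : SimpleGraph V) : Prop :=
  ∃ σ : List V → V, LegalCop G σ ∧ ∀ r : ℕ → V, LegalRun G r → Caught σ r

/-- `G` is a weak cop win: the cop has a legal strategy guaranteeing that in every legal robber
play, either the robber is caught or the robber occupies each vertex at only finitely many times. -/
def WeakCopWin {V : Type u} (G : SimpleGraph V) : Prop :=
  ∃ σ : List V → V, LegalCop G σ ∧
    ∀ r : ℕ → V, LegalRun G r → Caught σ r ∨ ∀ v : V, {n : ℕ | r n = v}.Finite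

/-- `G` is locally constructible: every finite set of vertices is contained in a finite set
inducing a constructible subgraph. -/
def LocallyConstructible {V : Type u} (G : SimpleGraph V) : Prop :=
  ∀ A : Set V, A.Finite → ∃ U : Set V, A ⊆ U ∧ U.Finite ∧ Constructible (G.induce U)

/-!
A finite constructible graph dismantles by folding each vertex onto a dominating earlier one.
Composing the last few folds gives retractions, and the image of the robber under them is a shadow.
The cop starts at the root, which is the shadow when everything is folded, and undoes one fold per
turn: domination is exactly what lets him step from the robber's old shadow to its new, sharper one.
When all folds are undone the shadow is the robber himself. This only needs the robber to stay in
the constructible set, so in a locally constructible graph he must leave or be caught.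
-/

section Moves

variable {V : Type u} {G : SimpleGraph V} {S : Set V} {p q x y : V}

/-- A move of the game from `p` to `q`: stay put or step along an edge. It unfolds to the
disjunctions in `DominatesOn`, `LegalCop` and `LegalRun`. -/
def IsMove (G : SimpleGraph V) (p q : V) : Prop :=
  q = p ∨ G.Adj p q

theorem IsMove.refl (p : V) : IsMove G p p :=
  Or.inl rfl

theorem IsMove.symm (h : IsMove G p q) : IsMove G q p :=
  h.imp Eq.symm SimpleGraph.Adj.symm

theorem isMove_map_iff {W : Type*} {H : SimpleGraph W} (e : H ↪g G) {a b : W} :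
    IsMove G (e a) (e b) ↔ IsMove H a b :=
  or_congr e.injective.eq_iff e.map_adj_iff

theorem DominatesOn.isMove_update_left [DecidableEq V] (h : DominatesOn G S y x) (hq : q ∈ S)
    (hpq : IsMove G p q) : IsMove G (Function.update id x y p) q := by
  rcases eq_or_ne p x with rfl | hpx
  · rw [Function.update_self]
    exact h.2 q hq hpq
  · rwa [Function.update_of_ne hpx]

theorem DominatesOn.isMove_update [DecidableEq V] (h : DominatesOn G S y x)
    (hp : Function.update id x y p ∈ S) (hq : q ∈ S) (hpq : IsMove G p q) :
    IsMove G (Function.update id x y p) (Function.update id x y q) :=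
  (h.isMove_update_left hp (h.isMove_update_left hq hpq).symm).symm

end Moves

/-- A scheme for catching a robber who stays in `S`: if the cop stands on the robber's `k`-th
shadow, then after any move of the robber inside `S` he can step to the `(k + 1)`-st shadow. The
zeroth shadow is a fixed vertex and the last one is the robber. Shadows of vertices outside `S`
are junk. -/
structure Pursuit {V : Type u} (G : SimpleGraph V) (S : Set V) where
  start : V
  length : ℕ
  shadow : ℕ → V → V
  shadow_zero : ∀ p ∈ S, shadow 0 p = start
  shadow_length : ∀ p ∈ S, shadow length p = p
  isMove_shadow : ∀ k < length, ∀ p ∈ S, ∀ q ∈ S, IsMove G p q →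
    IsMove G (shadow k p) (shadow (k + 1) q)

namespace Pursuit

variable {V : Type u} {G : SimpleGraph V} {S : Set V}

/-- The pursuit on a single vertex, where the cop has caught the robber from the start. -/
def singleton (G : SimpleGraph V) (x : V) : Pursuit G {x} where
  start := x
  length := 0
  shadow _ := id
  shadow_zero _ hp := hp
  shadow_length _ _ := rfl
  isMove_shadow _ hk := absurd hk (Nat.not_lt_zero _)

open Classical in
/-- Extend a pursuit on `S` by a dominated vertex `x`: the robber's shadows are those of his image
under the fold of `x` onto `y`, followed by the robber himself. -/
noncomputable def insertDominated (P : Pursuit G S) {x y : V} (hy : y ∈ S)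
    (hdom : DominatesOn G (insert x S) y x) : Pursuit G (insert x S) :=
  have fold_mem : ∀ p ∈ insert x S, Function.update id x y p ∈ S := by
    intro p hp
    rcases eq_or_ne p x with rfl | hpx
    · rwa [Function.update_self]
    · rw [Function.update_of_ne hpx]
      exact hp.resolve_left hpx
  { start := P.start
    length := P.length + 1
    shadow := fun k p => if k ≤ P.length then P.shadow k (Function.update id x y p) else p
    shadow_zero := fun p hp => by
      rw [if_pos (Nat.zero_le _), P.shadow_zero _ (fold_mem p hp)]
    shadow_length := fun p _ => if_neg (Nat.not_succ_le_self _)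
    isMove_shadow := fun k hk p hp q hq hpq => by
      rw [if_pos (Nat.le_of_lt_succ hk)]
      rcases Nat.lt_succ_iff_lt_or_eq.1 hk with hlt | rfl
      · rw [if_pos (Nat.succ_le_of_lt hlt)]
        exact P.isMove_shadow k hlt _ (fold_mem p hp) _ (fold_mem q hq)
          (hdom.isMove_update (.inr (fold_mem p hp)) hq hpq)
      · rw [if_neg (Nat.not_succ_le_self _), P.shadow_length _ (fold_mem p hp)]
        exact hdom.isMove_update_left hq hpq }

/-- Transport a pursuit along an induced embedding of graphs. -/
noncomputable def map {W : Type*} {H : SimpleGraph W} {T : Set W} (P : Pursuit H T) (e : H ↪g G) :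
    Pursuit G (e '' T) :=
  have : Nonempty W := ⟨P.start⟩
  have shadow_apply : ∀ k p, e (P.shadow k (Function.invFun e (e p))) = e (P.shadow k p) :=
    fun k p => by rw [Function.leftInverse_invFun e.injective]
  { start := e P.start
    length := P.length
    shadow := fun k v => e (P.shadow k (Function.invFun e v))
    shadow_zero := by
      rintro _ ⟨p, hp, rfl⟩
      rw [shadow_apply, P.shadow_zero p hp]
    shadow_length := by
      rintro _ ⟨p, hp, rfl⟩
      rw [shadow_apply, P.shadow_length p hp]
    isMove_shadow := by
      rintro k hk _ ⟨p, hp, rfl⟩ _ ⟨q, hq, rfl⟩ hpq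
      rw [shadow_apply, shadow_apply]
      exact (isMove_map_iff e).2 (P.isMove_shadow k hk p hp q hq ((isMove_map_iff e).1 hpq)) }

end Pursuit

theorem nonempty_pursuit_of_isLowerSet {W : Type u} [LinearOrder W] {H : SimpleGraph W}
    (hH : ConstructionOrderSpec H (· < ·)) (s : Finset W) :
    IsLowerSet (s : Set W) → s.Nonempty → Nonempty (Pursuit H s) := by
  induction s using Finset.induction_on_max with
  | empty => exact fun _ hne => absurd hne Finset.not_nonempty_empty
  | insert x s hlt ih =>
    intro hlower _
    rw [Finset.coe_insert] at hlower ⊢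
    have hs_lower : IsLowerSet (s : Set W) := fun a b hba ha =>
      (hlower hba (.inr ha)).resolve_left (hba.trans_lt (hlt a ha)).ne
    rcases s.eq_empty_or_nonempty with rfl | ⟨z, hz⟩
    · rw [Finset.coe_empty, insert_empty_eq]
      exact ⟨.singleton H x⟩
    · obtain ⟨y, hyx, hne, hdom⟩ := hH x ⟨z, hlt z hz⟩
      have hy : y ∈ (s : Set W) := (hlower hyx.le (.inl rfl)).resolve_left hne
      have hle : ∀ w ∈ insert x (s : Set W), w < x ∨ w = x := fun w hw =>
        hw.symm.imp_left (hlt w)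
      obtain ⟨P⟩ := ih hs_lower ⟨z, hz⟩
      exact ⟨P.insertDominated hy ⟨hne, fun w hw => hdom w (hle w hw)⟩⟩

theorem Constructible.nonempty_pursuit_univ {W : Type u} [Finite W] [Nonempty W]
    {H : SimpleGraph W} (hH : Constructible H) : Nonempty (Pursuit H Set.univ) := by
  classical
  obtain ⟨r, _, hr⟩ := hH
  let _ : LinearOrder W := linearOrderOfSTO r
  have := Fintype.ofFinite W
  rw [← Finset.coe_univ]
  refine nonempty_pursuit_of_isLowerSet hr Finset.univ ?_ Finset.univ_nonempty
  rw [Finset.coe_univ]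
  exact isLowerSet_univ

theorem Constructible.nonempty_pursuit_of_induce {V : Type u} {G : SimpleGraph V} {U : Set V}
    (hU : U.Finite) (hne : U.Nonempty) (hc : Constructible (G.induce U)) :
    Nonempty (Pursuit G U) := by
  have := hU.to_subtype
  have := hne.to_subtype
  obtain ⟨P⟩ := hc.nonempty_pursuit_univ
  have himage : SimpleGraph.Embedding.induce (G := G) U '' Set.univ = U :=
    Set.image_univ.trans Subtype.range_val
  exact ⟨himage ▸ P.map (.induce U)⟩

section Strategies

variable {V : Type u} {G : SimpleGraph V}

theorem copPos_succ (σ : List V → V) (r : ℕ → V) (n : ℕ) :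
    copPos σ r (n + 1) = σ ((List.ofFn fun i : Fin n => r i) ++ [r n]) :=
  congrArg σ List.ofFn_succ_last

open Classical in
/-- The legal strategy that tries to play `τ`: the cop moves to the position prescribed by `τ`
whenever this is a legal move from his actual position, and stays put otherwise. -/
noncomputable def legalize (G : SimpleGraph V) (τ : List V → V) (l : List V) : V :=
  l.reverseRecOn (τ []) fun l p c => if IsMove G c (τ (l ++ [p])) then τ (l ++ [p]) else c

theorem legalize_nil (τ : List V → V) : legalize G τ [] = τ [] := by
  rw [legalize, List.reverseRecOn_nil]

open Classical in
theorem legalize_concat (τ : List V → V) (l : List V) (p : V) :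
    legalize G τ (l ++ [p]) =
      if IsMove G (legalize G τ l) (τ (l ++ [p])) then τ (l ++ [p]) else legalize G τ l := by
  rw [legalize, List.reverseRecOn_concat]
  rfl

theorem legalCop_legalize (G : SimpleGraph V) (τ : List V → V) : LegalCop G (legalize G τ) := by
  intro l hl
  obtain ⟨l, p, rfl⟩ := (List.eq_nil_or_concat' l).resolve_left hl
  rw [List.dropLast_concat, legalize_concat]
  split_ifs with hmove
  · exact hmove
  · exact IsMove.refl _

theorem copPos_legalize {τ : List V → V} {r : ℕ → V} {n : ℕ}
    (h : ∀ k < n, IsMove G (copPos τ r k) (copPos τ r (k + 1))) :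
    copPos (legalize G τ) r n = copPos τ r n := by
  induction n with
  | zero => exact legalize_nil τ
  | succ n ih =>
    have hcur : copPos (legalize G τ) r n = copPos τ r n :=
      ih fun k hk => h k (hk.trans n.lt_succ_self)
    have hmove := h n n.lt_succ_self
    rw [← hcur, copPos_succ] at hmove
    rw [copPos_succ, copPos_succ, legalize_concat]
    exact if_pos hmove

end Strategies

namespace Pursuit

variable {V : Type u} {G : SimpleGraph V} {S : Set V}

/-- The strategy of standing on the `n`-th shadow of the robber after `n` moves. It need not be
legal against a robber who leaves `S`. -/
def shadowStrategy (P : Pursuit G S) (l : List V) : V :=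
  l.getLast?.elim P.start (P.shadow l.length)

variable (P : Pursuit G S) {r : ℕ → V}

theorem copPos_shadowStrategy_succ (r : ℕ → V) (n : ℕ) :
    copPos P.shadowStrategy r (n + 1) = P.shadow (n + 1) (r n) := by
  simp [copPos_succ, shadowStrategy]

theorem isMove_copPos_shadowStrategy (hr : LegalRun G r) (hS : ∀ n, r n ∈ S) {k : ℕ}
    (hk : k < P.length) :
    IsMove G (copPos P.shadowStrategy r k) (copPos P.shadowStrategy r (k + 1)) := by
  rw [copPos_shadowStrategy_succ]
  cases k with
  | zero =>
    have hmove := P.isMove_shadow 0 hk _ (hS 0) _ (hS 0) (.refl _)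
    rwa [P.shadow_zero _ (hS 0)] at hmove
  | succ k =>
    rw [copPos_shadowStrategy_succ]
    exact P.isMove_shadow (k + 1) hk _ (hS k) _ (hS (k + 1)) (hr k)

theorem caught_legalize_shadowStrategy (hr : LegalRun G r) (hS : ∀ n, r n ∈ S) :
    Caught (legalize G P.shadowStrategy) r := by
  have hpos := copPos_legalize fun _ hk => P.isMove_copPos_shadowStrategy hr hS hk
  cases hlen : P.length with
  | zero =>
    refine ⟨0, .inl ?_⟩
    have hcatch := P.shadow_length _ (hS 0)
    rw [hlen, P.shadow_zero _ (hS 0)] at hcatch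
    rw [hlen] at hpos
    exact hpos.trans hcatch
  | succ n =>
    refine ⟨n, .inr ?_⟩
    have hcatch := P.shadow_length _ (hS n)
    rw [hlen] at hpos hcatch
    rw [hpos, copPos_shadowStrategy_succ, hcatch]

end Pursuit

theorem cop_forces_robber_out_of_finite_set_general {V : Type u} (G : SimpleGraph V) {A U : Set V}
    (hAU : A ⊆ U) (hne : U.Nonempty) (hU : U.Finite) (hc : Constructible (G.induce U)) :
    ∃ σ : List V → V, LegalCop G σ ∧
      ∀ r : ℕ → V, LegalRun G r →
        ∃ m : ℕ, (copPos σ r m = r m ∨ copPos σ r (m + 1) = r m) ∨ r m ∉ A := by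
  obtain ⟨P⟩ := hc.nonempty_pursuit_of_induce hU hne
  refine ⟨legalize G P.shadowStrategy, legalCop_legalize G _, fun r hr => ?_⟩
  by_cases hstay : ∀ m, r m ∈ A
  · exact (P.caught_legalize_shadowStrategy hr fun m => hAU (hstay m)).imp fun _ => .inl
  · exact (not_forall.1 hstay).imp fun _ => .inr

theorem cop_forces_robber_out_of_finite_set {V : Type u} (G : SimpleGraph V)
    (hconn : G.Connected) (hlc : LocallyConstructible G) (A : Set V) (hA : A.Finite) :
    ∃ σ : List V → V, LegalCop G σ ∧
      ∀ r : ℕ → V, LegalRun G r →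
        ∃ m : ℕ, (copPos σ r m = r m ∨ copPos σ r (m + 1) = r m) ∨ r m ∉ A := by
  obtain ⟨v⟩ := hconn.nonempty
  obtain ⟨U, hvAU, hU, hc⟩ := hlc (insert v A) (hA.insert v)
  obtain ⟨hvU, hAU⟩ := Set.insert_subset_iff.1 hvAU
  exact cop_forces_robber_out_of_finite_set_general G hAU ⟨v, hvU⟩ hU hc
end

section
/- For any finite graph G and positive integer n, the hive graph of G of height n is constructible. -/
universe u

/-- The hive graph of `G` of height `n`: vertex set `(V × {0, ..., n}) ∪ {v}`, where the hive
vertex `v` (here `none`) is adjacent to every `(x, n)`, and distinct `(x, i)`, `(x', i')` are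
adjacent iff `x` and `x'` are adjacent or equal and `|i - i'| ≤ 1`. -/
def hiveGraph {V : Type u} (G : SimpleGraph V) (n : ℕ) :
    SimpleGraph (Option (V × Fin (n + 1))) :=
  SimpleGraph.fromRel (fun p q =>
    match p, q with
    | none, some (_, i) => i.val = n
    | some (a, i), some (b, j) => (a = b ∨ G.Adj a b) ∧ i.val ≤ j.val + 1 ∧ j.val ≤ i.val + 1
    | _, _ => False)

/-!
List the hive vertex first and then the layers `V × {i}` from the top down, each layer in any
well-order. A vertex of the top layer is dominated by the hive vertex, and a vertex `(a, i)` with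
`i < n` by `(a, i + 1)`: no neighbour of `(a, i)` in the layer `i - 1` below is present yet, and all
its neighbours in the layers `i` and `i + 1` are equal or adjacent to `(a, i + 1)`.
-/

theorem DominatesOn.mono {V : Type u} {G : SimpleGraph V} {S T : Set V} {x y : V} (hST : S ⊆ T)
    (h : DominatesOn G T y x) : DominatesOn G S y x :=
  ⟨h.1, fun z hz => h.2 z (hST hz)⟩

theorem constructible_of_rank {V : Type u} {α : Type*} [LinearOrder α] [WellFoundedLT α]
    {G : SimpleGraph V} (rank : V → α)
    (hdom : ∀ x, (∃ y ≠ x, rank y ≤ rank x) →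
      ∃ y, rank y < rank x ∧ DominatesOn G {z | rank z ≤ rank x} y x) :
    Constructible G := by
  obtain ⟨_, _⟩ := exists_wellFoundedLT V
  let key : V ↪ α ×ₗ V := ⟨fun x => toLex (rank x, x), fun _ _ h => congrArg Prod.snd h⟩
  have rank_le {x y : V} (h : key x < key y) : rank x ≤ rank y :=
    Prod.Lex.monotone_fst _ _ h.le
  refine ⟨fun x y => key x < key y, (RelEmbedding.preimage key (· < ·)).isWellOrder, ?_⟩
  rintro x ⟨w, hwx⟩
  have hw : w ≠ x := fun h => hwx.ne (congrArg key h)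
  obtain ⟨y, hyx, hy⟩ := hdom x ⟨w, hw, rank_le hwx⟩
  refine ⟨y, Prod.Lex.toLex_lt_toLex.2 (Or.inl hyx), hy.mono ?_⟩
  rintro z (hzx | rfl)
  · exact rank_le hzx
  · exact le_rfl

namespace hiveGraph

variable {V : Type u} {G : SimpleGraph V} {n : ℕ}

theorem adj_none_some {a : V} {i : Fin (n + 1)} :
    (hiveGraph G n).Adj none (some (a, i)) ↔ i = Fin.last n := by
  simp [hiveGraph, Fin.ext_iff]

theorem eq_or_adj_some_some {a b : V} {i j : Fin (n + 1)} :
    (some (b, j) = some (a, i) ∨ (hiveGraph G n).Adj (some (a, i)) (some (b, j))) ↔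
      (a = b ∨ G.Adj a b) ∧ i.val ≤ j.val + 1 ∧ j.val ≤ i.val + 1 := by
  simp only [hiveGraph, SimpleGraph.fromRel_adj, ne_eq, Option.some.injEq, Prod.mk.injEq,
    Fin.ext_iff, G.adj_comm b a]
  grind

/-- The position of a vertex in the construction: the hive vertex comes at stage `0` and the layer
`V × {i}` at stage `n - i + 1`, where `n - i` is encoded as `Fin.rev i`. This is the distance to
the hive vertex. -/
def depth : Option (V × Fin (n + 1)) → ℕ
  | none => 0
  | some (_, i) => i.rev + 1

theorem depth_some_pos (p : V × Fin (n + 1)) : 0 < depth (some p) := Nat.succ_pos _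

theorem depth_some_le_depth_some {a b : V} {i j : Fin (n + 1)} :
    depth (some (a, i)) ≤ depth (some (b, j)) ↔ j ≤ i :=
  Nat.succ_le_succ_iff.trans Fin.rev_le_rev

theorem dominatesOn_none_some_last (a : V) :
    DominatesOn (hiveGraph G n) {z | depth z ≤ depth (some (a, Fin.last n))}
      none (some (a, Fin.last n)) := by
  refine ⟨(Option.some_ne_none _).symm, ?_⟩
  rintro (_ | ⟨b, j⟩) hz -
  · exact Or.inl rfl
  · exact Or.inr (adj_none_some.2 (Fin.last_le_iff.1 (depth_some_le_depth_some.1 hz)))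

theorem dominatesOn_some_succ_some_castSucc (a : V) (i : Fin n) :
    DominatesOn (hiveGraph G n) {z | depth z ≤ depth (some (a, i.castSucc))}
      (some (a, i.succ)) (some (a, i.castSucc)) := by
  refine ⟨by simp [Fin.ext_iff], ?_⟩
  rintro (_ | ⟨b, j⟩) hz hadj
  · have hadj_none := hadj.resolve_left (Option.some_ne_none _).symm
    exact absurd (adj_none_some.1 hadj_none.symm) i.castSucc_ne_last
  · have hij : i.val ≤ j.val := depth_some_le_depth_some.1 hz
    obtain ⟨hab, -, hji⟩ := eq_or_adj_some_some.1 hadj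
    rw [Fin.val_castSucc] at hji
    refine eq_or_adj_some_some.2 ⟨hab, ?_, ?_⟩ <;> rw [Fin.val_succ] <;> omega

theorem exists_dominatesOn_some (a : V) (i : Fin (n + 1)) :
    ∃ y, depth y < depth (some (a, i)) ∧
      DominatesOn (hiveGraph G n) {z | depth z ≤ depth (some (a, i))} y (some (a, i)) := by
  cases i using Fin.lastCases with
  | last => exact ⟨none, depth_some_pos _, dominatesOn_none_some_last a⟩
  | cast i =>
    refine ⟨some (a, i.succ), ?_, dominatesOn_some_succ_some_castSucc a i⟩
    exact not_le.1 fun h => i.castSucc_lt_succ.not_ge (depth_some_le_depth_some.1 h)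

end hiveGraph

theorem hiveGraph_constructible_general {V : Type u} (G : SimpleGraph V) (n : ℕ) :
    Constructible (hiveGraph G n) := by
  refine constructible_of_rank hiveGraph.depth ?_
  rintro (_ | ⟨a, i⟩) ⟨y, hy, hle⟩
  · obtain ⟨p, rfl⟩ := Option.ne_none_iff_exists'.1 hy
    exact absurd hle (hiveGraph.depth_some_pos p).not_ge
  · exact hiveGraph.exists_dominatesOn_some a i

theorem hiveGraph_constructible {V : Type u} [Fintype V] (G : SimpleGraph V) (n : ℕ)
    (hn : 0 < n) : Constructible (hiveGraph G n) :=
  hiveGraph_constructible_general G n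
end
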